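/- arXiv:1502.02258 — 4 statements merged into one kernel-verified Lean document; each statement's English description precedes it below -/
import Mathlib

section
/- A function f : ℝ → ℂ is Bohr almost periodic if and only if it has the approximation property: for every ε > 0 there exist N ∈ ℕ, coefficients a_1, …, a_N ∈ ℂ and frequencies θ_1, …, θ_N ∈ ℝ such that sup_{x ∈ ℝ} | f(x) − ∑_{i=1}^{N} a_i e^{2πiθ_i x} | ≤ ε. -/
/-!
Trigonometric polynomials are Bohr almost periodic because the orbit `t ↦ (e^{2πiθ_j t})_j` in the
torus is totally bounded (`exists_common_almostPeriod`), and Bohr almost periodicity survives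
uniform limits (`bohrAP_of_forall_near`).

For the converse, let `f` be Bohr almost periodic. The translation seminorm
`p(t) = sup_x |f(x + t) - f(x)|` makes `ℝ` a seminormed group. It is totally bounded, since every
`t` is within `ε` (for `p`) of the compact interval `[0, L]`; so its completion `K` is a compact
abelian group, and `f`, being `1`-Lipschitz for `p`, factors as a continuous function on `K`
composed with the continuous homomorphism `ℝ → K`. By Stone-Weierstrass
(`exists_sum_characters_near`) it suffices that the continuous characters of `K` separate points;
those of `ℝ` are the exponentials `e^{2πiθx}` (`real_character_eq_exp`).

Separation of points (`exists_character_of_rep`, applied to `L²(K)`) comes from Gelfand duality. Let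
`τ` be a strongly continuous unitary representation of `K` and `a ∈ K` with `τ a ≠ 1`. The operators
`τ x` and the averages `T k = ∫ k(y) τ(y) dy` generate a commutative C⋆-algebra. With `k` an
approximate identity, `τ a * T k - T k ≠ 0`, so some character `φ` of this algebra does not vanish
there. Then `x ↦ φ (τ x)` is a unimodular homomorphism with value `≠ 1` at `a`; it is continuous
because `φ (τ x) = φ (τ x * T k) / φ (T k)` and `x ↦ τ x * T k` is norm continuous, although
`τ` itself need not be.
-/

open MeasureTheory Filter Topology
open scoped ENNReal NNReal

noncomputable section

/-- `f : ℝ → ℂ` is Bohr almost periodic. -/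
def BohrAP (f : ℝ → ℂ) : Prop :=
  Continuous f ∧ ∀ ε : ℝ, 0 < ε → ∃ L : ℝ, 0 < L ∧ ∀ a : ℝ,
    ∃ τ, τ ∈ Set.Icc a (a + L) ∧ ∀ x : ℝ, ‖f (x - τ) - f x‖ < ε

/-- The Fourier coefficient of `f` at frequency `ω` equals `c`. -/
def HasFourierCoeff (f : ℝ → ℂ) (ω : ℝ) (c : ℂ) : Prop :=
  Tendsto (fun L : ℝ => (2 * (L : ℂ))⁻¹ *
      ∫ x in (-L)..L, f x * Complex.exp (((-(2 * Real.pi * ω * x) : ℝ) : ℂ) * Complex.I))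
    atTop (nhds c)

/-- `f'` is a weak derivative of `f` on `ℝ`. -/
def HasWeakDeriv (f f' : ℝ → ℂ) : Prop :=
  LocallyIntegrable f' volume ∧ ∀ x : ℝ, f x = f 0 + ∫ y in (0:ℝ)..x, f' y

/-- The `S^{1,2}(ℝ)`-norm of `f` (with weak derivative `f'`), valued in `ℝ≥0∞`. -/
def S12 (f f' : ℝ → ℂ) : ℝ≥0∞ :=
  ⨆ y : ℝ, (∫⁻ x in Set.Ioc y (y + 1),
    ((‖f x‖₊ : ℝ≥0∞) ^ 2 + (‖f' x‖₊ : ℝ≥0∞) ^ 2)) ^ (1/2 : ℝ)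

/-- The averaging operator `A_{n,L}[f]`. -/
def avgOp (f : ℝ → ℂ) (L : ℝ) (n : ℕ) (x : ℝ) : ℂ :=
  (n : ℂ)⁻¹ * ∑ m ∈ Finset.range n, f (x + m * L)

/-- `f` is limit periodic: a uniform limit of continuous periodic functions. -/
def LimitPeriodic (f : ℝ → ℂ) : Prop :=
  ∃ g : ℕ → ℝ → ℂ, (∀ j, Continuous (g j)) ∧
    (∀ j, ∃ P : ℝ, 0 < P ∧ Function.Periodic (g j) P) ∧
    TendstoUniformly g f atTop

/-! ### Characters from unitary representations -/

/-- A nonzero element of a commutative closed star subalgebra is detected by a character. -/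
theorem exists_starAlgHom_ne_zero {B : Type*} [CStarAlgebra B] (A : StarSubalgebra ℂ B)
    (hcl : IsClosed (A : Set B)) (hcomm : ∀ x ∈ A, ∀ y ∈ A, x * y = y * x)
    (b : A) (hb : b ≠ 0) : ∃ φ : A →⋆ₐ[ℂ] ℂ, Continuous φ ∧ φ b ≠ 0 := by
  have := hcl
  let _ : CommCStarAlgebra A :=
    { (inferInstance : CStarAlgebra A) with
      mul_comm := fun x y => Subtype.ext (hcomm x x.2 y y.2) }
  have h : WeakDual.gelfandTransform ℂ A b ≠ 0 := fun h =>
    hb ((gelfandTransform_isometry A).injective (h.trans (map_zero _).symm))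
  obtain ⟨φ, hφ⟩ := DFunLike.ne_iff.1 h
  exact ⟨⟨WeakDual.CharacterSpace.toAlgHom φ, fun a => map_star φ a⟩, map_continuous φ, hφ⟩

section Rep
variable {K H : Type*} [NormedAddCommGroup K] [CompactSpace K] [MeasurableSpace K] [BorelSpace K]
  [NormedAddCommGroup H] [InnerProductSpace ℂ H]

theorem integrable_smul_rep (μ : Measure K) [IsFiniteMeasure μ]
    {τ : K → H →L[ℂ] H} (hc : ∀ u, Continuous fun y => τ y u) (k : C(K, ℂ)) (u : H) :
    Integrable (fun y => k y • τ y u) μ :=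
  (k.continuous.smul (hc u)).integrable_of_hasCompactSupport (HasCompactSupport.of_compactSpace _)

/-- The average `∫ k(y) τ(y) dμ(y)` of a strongly continuous isometric family of operators `τ`, as a
continuous linear function of the weight `k`. The integral is taken pointwise (in the strong
sense), as `y ↦ τ y` need not be norm measurable. -/
def repAvg (μ : Measure K) [IsFiniteMeasure μ] (τ : K → H →L[ℂ] H)
    (hc : ∀ u, Continuous fun y => τ y u) (hn : ∀ y u, ‖τ y u‖ = ‖u‖) :
    C(K, ℂ) →L[ℂ] H →L[ℂ] H :=
  LinearMap.mkContinuous₂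
    (LinearMap.mk₂ ℂ (fun k u => ∫ y, k y • τ y u ∂μ)
      (fun k l u => by
        rw [← integral_add (integrable_smul_rep μ hc k u) (integrable_smul_rep μ hc l u)]
        simp [add_smul])
      (fun c k u => by simp [mul_smul, integral_smul])
      (fun k u v => by
        rw [← integral_add (integrable_smul_rep μ hc k u) (integrable_smul_rep μ hc k v)]
        simp)
      (fun c k u => by
        rw [← integral_smul]
        simp [smul_comm c]))
    (μ.real Set.univ) (fun k u => by
      have := norm_integral_le_of_norm_le_const (μ := μ) (f := fun y => k y • τ y u)
        (C := ‖k‖ * ‖u‖) (Eventually.of_forall fun y => by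
          rw [norm_smul, hn]
          gcongr
          exact k.norm_coe_le_norm y)
      simp only [LinearMap.mk₂_apply]
      linarith)

theorem repAvg_apply (μ : Measure K) [IsFiniteMeasure μ] (τ : K → H →L[ℂ] H)
    (hc : ∀ u, Continuous fun y => τ y u) (hn : ∀ y u, ‖τ y u‖ = ‖u‖) (k : C(K, ℂ)) (u : H) :
    repAvg μ τ hc hn k u = ∫ y, k y • τ y u ∂μ := rfl

variable [CompleteSpace H]

/-- An operator commuting with the representation commutes with its averages. In particular the
averages commute with each other, without an appeal to Fubini. -/
theorem commute_repAvg (μ : Measure K) [IsFiniteMeasure μ] (τ : K → H →L[ℂ] H)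
    (hc : ∀ u, Continuous fun y => τ y u) (hn : ∀ y u, ‖τ y u‖ = ‖u‖) (k : C(K, ℂ))
    (S : H →L[ℂ] H) (hS : ∀ y, Commute S (τ y)) : Commute S (repAvg μ τ hc hn k) := by
  ext u
  have h1 : ∀ y, S (τ y u) = τ y (S u) := fun y => congrArg (fun T => T u) (hS y).eq
  simp only [mul_apply_eq_comp, repAvg_apply]
  rw [← ContinuousLinearMap.integral_comp_comm S (integrable_smul_rep μ hc k u)]
  simp [h1]

/-- Continuous approximate identities on `K`. -/
theorem exists_bump (μ : Measure K) [IsFiniteMeasure μ] [μ.IsOpenPosMeasure] {δ : ℝ} (hδ : 0 < δ) :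
    ∃ k : C(K, ℝ), (∀ y, 0 ≤ k y) ∧ (∀ y, δ ≤ ‖y‖ → k y = 0) ∧ ∫ y, k y ∂μ = 1 := by
  let k₀ : C(K, ℝ) := ⟨fun y => max 0 (δ - ‖y‖), by fun_prop⟩
  have hpos : 0 < ∫ y, k₀ y ∂μ :=
    k₀.continuous.integral_pos_of_hasCompactSupport_nonneg_nonzero
      (HasCompactSupport.of_compactSpace _) (fun y => le_max_left _ _) (x := 0)
      (by simp [k₀, hδ.le, hδ.ne'])
  refine ⟨(∫ y, k₀ y ∂μ)⁻¹ • k₀, fun y => ?_, fun y hy => ?_, ?_⟩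
  · exact mul_nonneg (inv_nonneg.2 hpos.le) (le_max_left _ _)
  · have : k₀ y = 0 := max_eq_left (by linarith)
    simp [this]
  · simp only [ContinuousMap.coe_smul, Pi.smul_apply, smul_eq_mul]
    rw [integral_const_mul, inv_mul_cancel₀ hpos.ne']

theorem exists_repAvg_near (μ : Measure K) [IsFiniteMeasure μ] [μ.IsOpenPosMeasure]
    (τ : K → H →L[ℂ] H)
    (hc : ∀ u, Continuous fun y => τ y u) (hn : ∀ y u, ‖τ y u‖ = ‖u‖) (h0 : τ 0 = 1) (u : H)
    {ε : ℝ} (hε : 0 < ε) : ∃ k : C(K, ℂ), ‖repAvg μ τ hc hn k u - u‖ ≤ ε := by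
  obtain ⟨δ, hδ, h⟩ := Metric.continuousAt_iff.1 ((hc u).continuousAt (x := 0)) ε hε
  obtain ⟨k, hk0, hkδ, hk1⟩ := exists_bump μ hδ
  have hki : Integrable (fun y => k y) μ :=
    k.continuous.integrable_of_hasCompactSupport (HasCompactSupport.of_compactSpace _)
  let k' : C(K, ℂ) := ⟨fun y => (k y : ℂ), by fun_prop⟩
  refine ⟨k', ?_⟩
  have h1 : ∫ y, k' y • u ∂μ = u := by
    rw [integral_smul_const]
    have : ∫ y, k' y ∂μ = 1 := by
      change ∫ y, (k y : ℂ) ∂μ = 1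
      rw [integral_complex_ofReal, hk1, Complex.ofReal_one]
    rw [this, one_smul]
  have h2 : Integrable (fun y => k' y • u) μ :=
    (by fun_prop : Continuous fun y => k' y • u).integrable_of_hasCompactSupport
      (HasCompactSupport.of_compactSpace _)
  calc ‖repAvg μ τ hc hn k' u - u‖ = ‖∫ y, k' y • (τ y u - u) ∂μ‖ := by
        simp_rw [smul_sub]
        rw [integral_sub (integrable_smul_rep μ hc k' u) h2, h1, repAvg_apply]
    _ ≤ ∫ y, k y * ε ∂μ := by
        refine norm_integral_le_of_norm_le (hki.mul_const ε) (Eventually.of_forall fun y => ?_)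
        have e : ‖k' y‖ = k y := by simp [k', abs_of_nonneg (hk0 y)]
        rw [norm_smul, e]
        rcases lt_or_ge ‖y‖ δ with hy | hy
        · refine mul_le_mul_of_nonneg_left ?_ (hk0 y)
          have := @h y (by simpa using hy)
          simp only [h0, one_apply_eq_self, dist_eq_norm] at this
          exact this.le
        · simp [hkδ y hy]
    _ = ε := by rw [integral_mul_const, hk1, one_mul]

theorem rep_mul_repAvg (μ : Measure K) [IsFiniteMeasure μ] [μ.IsAddLeftInvariant]
    (τ : K → H →L[ℂ] H)
    (hc : ∀ u, Continuous fun y => τ y u) (hn : ∀ y u, ‖τ y u‖ = ‖u‖)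
    (hadd : ∀ x y, τ (x + y) = τ x * τ y) (k : C(K, ℂ)) (x : K) :
    τ x * repAvg μ τ hc hn k = repAvg μ τ hc hn (k.comp ⟨fun y => -x + y, by fun_prop⟩) := by
  ext u
  simp only [mul_apply_eq_comp, repAvg_apply]
  rw [← ContinuousLinearMap.integral_comp_comm (τ x) (integrable_smul_rep μ hc k u),
    ← integral_add_left_eq_self _ (-x)]
  refine integral_congr_ae (Eventually.of_forall fun y => ?_)
  have : τ x (τ (-x + y) u) = τ y u := by
    rw [← mul_apply_eq_comp, ← hadd]; simp
  simp [this]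

/-- Averaging upgrades strong continuity of `τ` to norm continuity. -/
theorem continuous_rep_mul_repAvg (μ : Measure K) [IsFiniteMeasure μ] [μ.IsAddLeftInvariant]
    (τ : K → H →L[ℂ] H)
    (hc : ∀ u, Continuous fun y => τ y u) (hn : ∀ y u, ‖τ y u‖ = ‖u‖)
    (hadd : ∀ x y, τ (x + y) = τ x * τ y) (k : C(K, ℂ)) :
    Continuous fun x => τ x * repAvg μ τ hc hn k := by
  simp_rw [rep_mul_repAvg μ τ hc hn hadd k]
  refine (repAvg μ τ hc hn).continuous.comp ?_
  exact ContinuousMap.continuous_of_continuous_uncurry _ (by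
    simp only [Function.uncurry_def, ContinuousMap.comp_apply, ContinuousMap.coe_mk]
    fun_prop)

/-- An element acting nontrivially in some strongly continuous unitary representation of a compact
abelian group is not annihilated by every continuous character. -/
theorem exists_character_of_rep (μ : Measure K) [IsFiniteMeasure μ] [μ.IsAddHaarMeasure]
    (τ : K → H →L[ℂ] H)
    (hc : ∀ u, Continuous fun y => τ y u) (hn : ∀ y u, ‖τ y u‖ = ‖u‖) (h0 : τ 0 = 1)
    (hadd : ∀ x y, τ (x + y) = τ x * τ y) (a : K) (ha : τ a ≠ 1) :
    ∃ χ : C(K, ℂ), (∀ x y, χ (x + y) = χ x * χ y) ∧ (∀ x, ‖χ x‖ = 1) ∧ χ a ≠ 1 := by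
  have hstar : ∀ x, star (τ x) * τ x = 1 := fun x =>
    ((τ x).norm_map_iff_adjoint_comp_self).1 (hn x)
  have hstar' : ∀ x, star (τ x) = τ (-x) := fun x => by
    calc star (τ x) = star (τ x) * (τ x * τ (-x)) := by rw [← hadd]; simp [h0]
      _ = τ (-x) := by rw [← mul_assoc, hstar, one_mul]
  have hττ : ∀ x y, Commute (τ x) (τ y) := fun x y => by
    rw [commute_iff_eq, ← hadd, ← hadd, add_comm]
  let T := repAvg μ τ hc hn
  have hTτ : ∀ k x, Commute (T k) (τ x) := fun k x =>
    (commute_repAvg μ τ hc hn k (τ x) (hττ x)).symm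
  have hTτs : ∀ k x, Commute (star (T k)) (τ x) := fun k x => by
    have := (hTτ k (-x)).star_star
    rwa [hstar', neg_neg] at this
  let S : Set (H →L[ℂ] H) := Set.range τ ∪ Set.range T
  have hS : S ⊆ StarSubalgebra.centralizer ℂ S := by
    have key : ∀ s ∈ S, (∀ x, Commute s (τ x)) ∧ (∀ x, Commute (star s) (τ x)) := by
      rintro _ (⟨x, rfl⟩ | ⟨k, rfl⟩)
      · exact ⟨hττ x, fun y => by rw [hstar']; exact hττ _ _⟩
      · exact ⟨hTτ k, hTτs k⟩
    intro z hz
    rw [SetLike.mem_coe, StarSubalgebra.mem_centralizer_iff]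
    intro g hg
    obtain ⟨h1, h2⟩ := key g hg
    rcases hz with ⟨x, rfl⟩ | ⟨k, rfl⟩
    · exact ⟨h1 x, h2 x⟩
    · exact ⟨commute_repAvg μ τ hc hn k g h1, commute_repAvg μ τ hc hn k _ h2⟩
  -- The bicommutant of `S` is commutative because `S` lies in its own commutant.
  let A : StarSubalgebra ℂ (H →L[ℂ] H) :=
    StarSubalgebra.centralizer ℂ (StarSubalgebra.centralizer ℂ S : Set (H →L[ℂ] H))
  have hSA : S ⊆ A := (StarAlgebra.subset_adjoin ℂ S).trans
    (StarAlgebra.adjoin_le_centralizer_centralizer ℂ S)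
  have hAS : A ≤ StarSubalgebra.centralizer ℂ S := StarSubalgebra.centralizer_le _ _ _ hS
  have hcomm : ∀ x ∈ A, ∀ y ∈ A, x * y = y * x := fun x hx y hy =>
    ((StarSubalgebra.mem_centralizer_iff ℂ).1 hy x (hAS hx)).1
  have hcl : IsClosed (A : Set (H →L[ℂ] H)) := by
    rw [StarSubalgebra.coe_centralizer]
    exact Set.isClosed_centralizer _
  obtain ⟨u, hu⟩ := DFunLike.ne_iff.1 ha
  have hu' : 0 < ‖τ a u - u‖ := norm_pos_iff.2 (sub_ne_zero.2 hu)
  obtain ⟨k, hk⟩ := exists_repAvg_near μ τ hc hn h0 u (ε := ‖τ a u - u‖ / 3) (by positivity)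
  let t : K → A := fun x => ⟨τ x, hSA (Or.inl ⟨x, rfl⟩)⟩
  let b : A := ⟨T k, hSA (Or.inr ⟨k, rfl⟩)⟩
  have hb : t a * b - b ≠ 0 := by
    intro h
    have h1 : τ a (T k u) = T k u := by
      have := congrArg (fun z : A => (z : H →L[ℂ] H) u) h
      exact sub_eq_zero.1 this
    have h2 : ‖τ a u - u‖ ≤ ‖τ a (T k u - u)‖ + ‖T k u - u‖ := by
      rw [map_sub, h1]
      calc ‖τ a u - u‖ = ‖(T k u - u) - (T k u - τ a u)‖ := by congr 1; abel
        _ ≤ _ := by rw [add_comm]; exact norm_sub_le _ _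
    rw [hn] at h2
    change ‖T k u - u‖ ≤ _ at hk
    linarith
  obtain ⟨φ, hφc, hφ⟩ := exists_starAlgHom_ne_zero A hcl hcomm _ hb
  rw [map_sub, map_mul] at hφ
  have hφb : φ b ≠ 0 := fun h => hφ (by simp [h])
  have hφa : φ (t a) ≠ 1 := fun h => hφ (by simp [h])
  have htadd : ∀ x y, t (x + y) = t x * t y := fun x y => Subtype.ext (hadd x y)
  have hts : ∀ x, star (t x) * t x = 1 := fun x => Subtype.ext (hstar x)
  -- `τ` is only strongly continuous, so continuity of `φ (t x)` is read off from `φ (t x * b)`.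
  have hcont : Continuous fun x => φ (t x) := by
    have : (fun x => φ (t x)) = fun x => φ (t x * b) * (φ b)⁻¹ := by
      ext x; rw [map_mul, mul_inv_cancel_right₀ hφb]
    rw [this]
    refine (hφc.comp ?_).mul continuous_const
    exact (continuous_rep_mul_repAvg μ τ hc hn hadd k).subtype_mk _
  refine ⟨⟨_, hcont⟩, fun x y => by simp [htadd], fun x => ?_, hφa⟩
  have h1 := congrArg φ (hts x)
  rw [map_mul, map_star, map_one, Complex.star_def, Complex.conj_mul'] at h1
  have h2 : ‖φ (t x)‖ ^ 2 = 1 := by exact_mod_cast h1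
  exact (pow_eq_one_iff_of_nonneg (norm_nonneg _) two_ne_zero).1 h2

end Rep

/-! ### Density of the span of the characters -/

section Compact
variable (K : Type*) [NormedAddCommGroup K]

/-- The continuous unitary characters of the additive group `K`, as complex-valued functions. -/
def characters : Submonoid C(K, ℂ) where
  carrier := {χ | (∀ x y, χ (x + y) = χ x * χ y) ∧ ∀ x, ‖χ x‖ = 1}
  mul_mem' := by
    rintro χ ψ ⟨h1, h2⟩ ⟨h3, h4⟩
    exact ⟨fun x y => by simp only [ContinuousMap.mul_apply, h1, h3]; ring,
      fun x => by simp [h2, h4]⟩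
  one_mem' := by simp

variable {K} [CompactSpace K]

/-- The characters of a compact abelian group separate points: the translation representation on
`L²(K)` is faithful. -/
theorem exists_character_ne_one [MeasurableSpace K] [BorelSpace K] {a : K} (ha : a ≠ 0) :
    ∃ χ ∈ characters K, χ a ≠ 1 := by
  let μ : Measure K := Measure.addHaar
  have hmp : ∀ y : K, MeasurePreserving (fun x => y + x) μ μ := measurePreserving_add_left μ
  let τ : K → Lp ℂ 2 μ →L[ℂ] Lp ℂ 2 μ := fun y =>
    (Lp.compMeasurePreservingₗᵢ ℂ (fun x => y + x) (hmp y)).toContinuousLinearMap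
  have hae : ∀ y (u : Lp ℂ 2 μ), τ y u =ᵐ[μ] fun x => u (y + x) := fun y u =>
    Lp.coeFn_compMeasurePreserving u (hmp y)
  have hc : ∀ u, Continuous fun y => τ y u := fun u =>
    Continuous.compMeasurePreservingLp (f := fun _ => u)
      (g := fun y : K => (⟨fun x => y + x, by fun_prop⟩ : C(K, K)))
      continuous_const (ContinuousMap.continuous_of_continuous_uncurry _ (by
        simp only [Function.uncurry_def, ContinuousMap.coe_mk]; fun_prop)) hmp (by simp)
  have hn : ∀ y u, ‖τ y u‖ = ‖u‖ := fun y u => LinearIsometry.norm_map _ u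
  have h0 : τ 0 = 1 := by
    ext1 u
    refine Lp.ext ((hae 0 u).trans ?_)
    simp
  have hadd : ∀ x y, τ (x + y) = τ x * τ y := by
    intro x y
    ext1 u
    refine Lp.ext ((hae _ u).trans ?_)
    have h1 := hae x (τ y u)
    have h2 := (hmp x).quasiMeasurePreserving.ae_eq_comp (hae y u)
    filter_upwards [h1, h2] with z h1 h2
    simp only [Function.comp_apply] at h2
    rw [mul_apply_eq_comp, h1, h2]
    congr 1; abel
  refine (exists_character_of_rep μ τ hc hn h0 hadd a ?_).imp fun χ h => ⟨⟨h.1, h.2.1⟩, h.2.2⟩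
  intro h
  -- `g` vanishes only at `0`, so it is not invariant under translation by `a`.
  let g : C(K, ℂ) := ⟨fun x => (‖x‖ : ℂ), by fun_prop⟩
  let u : Lp ℂ 2 μ := ContinuousMap.toLp 2 μ ℂ g
  have hu : u =ᵐ[μ] g := ContinuousMap.coeFn_toLp μ g
  have h1 : (fun x => g (a + x)) =ᵐ[μ] g := by
    have h2 := (hmp a).quasiMeasurePreserving.ae_eq_comp hu
    have h3 := hae a u
    rw [h, one_apply_eq_self] at h3
    exact (h2.symm.trans h3.symm).trans hu
  have h2 := Measure.eq_of_ae_eq h1 (by fun_prop) (by fun_prop)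
  have h3 := congrFun h2 0
  simp [g, ha] at h3

/-- Stone-Weierstrass for the characters: they are closed under products and conjugation, so the
star algebra they generate is their linear span. -/
theorem exists_sum_characters_near (F : C(K, ℂ)) {ε : ℝ} (hε : 0 < ε) :
    ∃ (N : ℕ) (a : Fin N → ℂ) (χ : Fin N → characters K),
      ‖F - ∑ i, a i • (χ i : C(K, ℂ))‖ < ε := by
  borelize K
  have hstar : (characters K : Set C(K, ℂ)) ∪ star (characters K : Set C(K, ℂ)) =
      characters K := by
    refine Set.union_eq_self_of_subset_right ?_
    rintro χ ⟨h1, h2⟩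
    refine ⟨fun x y => ?_, fun x => by simpa using h2 x⟩
    have := congrArg star (h1 x y)
    simpa using this
  have hspan : Subalgebra.toSubmodule
      (StarAlgebra.adjoin ℂ (characters K : Set C(K, ℂ))).toSubalgebra =
        Submodule.span ℂ (characters K : Set C(K, ℂ)) := by
    rw [StarAlgebra.adjoin_toSubalgebra, hstar, Algebra.adjoin_eq_span, Submonoid.closure_eq]
  have hsep : (StarAlgebra.adjoin ℂ (characters K : Set C(K, ℂ))).SeparatesPoints := by
    intro x y hxy
    obtain ⟨χ, hχ, h⟩ := exists_character_ne_one (sub_ne_zero.2 hxy)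
    refine ⟨χ, ⟨χ, StarAlgebra.subset_adjoin ℂ _ hχ, rfl⟩, fun hxy' => h ?_⟩
    have h1 := hχ.1 (x - y) y
    rw [sub_add_cancel, hxy'] at h1
    have h2 : χ y ≠ 0 := norm_ne_zero_iff.1 (by rw [hχ.2]; exact one_ne_zero)
    exact (mul_eq_right₀ h2).1 h1.symm
  have htop := ContinuousMap.starSubalgebra_topologicalClosure_eq_top_of_separatesPoints _ hsep
  have hF : F ∈ closure (StarAlgebra.adjoin ℂ (characters K : Set C(K, ℂ)) : Set C(K, ℂ)) := by
    rw [← StarSubalgebra.topologicalClosure_coe, htop]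
    trivial
  obtain ⟨G, hG, hFG⟩ := Metric.mem_closure_iff.1 hF ε hε
  have hG' : G ∈ Submodule.span ℂ (characters K : Set C(K, ℂ)) := by rw [← hspan]; exact hG
  obtain ⟨N, a, χ, rfl⟩ := Submodule.mem_span_set'.1 hG'
  exact ⟨N, a, χ, by rwa [dist_eq_norm] at hFG⟩

end Compact

/-- Continuous unitary characters of `ℝ` are exponentials. Such a `ψ` equals a constant multiple of
`∫ t in x..(x + h), ψ t`, so it is differentiable and solves `ψ' = α ψ`. -/
theorem real_character_eq_exp {ψ : ℝ → ℂ} (hc : Continuous ψ)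
    (hadd : ∀ x y, ψ (x + y) = ψ x * ψ y) (hn : ∀ x, ‖ψ x‖ = 1) :
    ∃ θ : ℝ, ∀ x : ℝ, ψ x = Complex.exp (((2 * Real.pi * θ * x : ℝ) : ℂ) * Complex.I) := by
  have hne : ∀ x, ψ x ≠ 0 := fun x => norm_ne_zero_iff.1 (by rw [hn]; exact one_ne_zero)
  let Φ : ℝ → ℂ := fun x => ∫ t in (0 : ℝ)..x, ψ t
  have hΦ : ∀ x, HasDerivAt Φ (ψ x) x := fun x => (hc.integral_hasStrictDerivAt 0 x).hasDerivAt
  obtain ⟨h, hh⟩ : ∃ h, Φ h ≠ 0 := by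
    by_contra! H
    have h1 : HasDerivAt Φ 0 0 := by
      rw [show Φ = fun _ => (0 : ℂ) from funext H]; exact hasDerivAt_const _ _
    exact hne 0 ((hΦ 0).unique h1)
  have hψ : ∀ x, ψ x = (Φ (x + h) - Φ x) / Φ h := by
    intro x
    rw [eq_div_iff hh]
    have h1 : Φ (x + h) - Φ x = ∫ t in x..(x + h), ψ t :=
      intervalIntegral.integral_interval_sub_left (hc.intervalIntegrable _ _)
        (hc.intervalIntegrable _ _)
    have h2 : ∫ t in (0 : ℝ)..h, ψ (x + t) = ∫ t in x..(x + h), ψ t := by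
      rw [intervalIntegral.integral_comp_add_left (fun t => ψ t), add_zero]
    rw [h1, ← h2]
    simp_rw [hadd]
    rw [intervalIntegral.integral_const_mul]
  let α : ℂ := (ψ h - 1) / Φ h
  have hderiv : ∀ x, HasDerivAt ψ (α * ψ x) x := by
    intro x
    have h1 : HasDerivAt (fun x => (Φ (x + h) - Φ x) / Φ h) ((ψ (x + h) - ψ x) / Φ h) x :=
      (((hΦ (x + h)).comp_add_const x h).sub (hΦ x)).div_const _
    rw [← show ψ = _ from funext hψ, hadd] at h1
    convert h1 using 1
    simp only [α]; ring
  have h0 : ψ 0 = 1 := by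
    have := hadd 0 0
    rw [add_zero] at this
    exact (mul_eq_right₀ (hne 0)).1 this.symm
  have hexp : ∀ x : ℝ, ψ x = Complex.exp (α * x) := by
    have h1 : ∀ x : ℝ, HasDerivAt (fun x : ℝ => ψ x * Complex.exp (-α * x)) 0 x := by
      intro x
      have h2 : HasDerivAt (fun x : ℝ => -α * (x : ℂ)) (-α) x := by
        simpa using (Complex.ofRealCLM.hasDerivAt (x := x)).const_mul (-α)
      exact ((hderiv x).mul h2.cexp).congr_deriv (by ring)
    intro x
    have h3 := is_const_of_deriv_eq_zero (fun x => (h1 x).differentiableAt) (fun x => (h1 x).deriv) x 0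
    simp only [h0, Complex.ofReal_zero, mul_zero, Complex.exp_zero, mul_one] at h3
    rw [neg_mul, Complex.exp_neg] at h3
    exact (mul_inv_eq_one₀ (Complex.exp_ne_zero _)).1 h3
  have hre : α.re = 0 := by
    have := hn 1
    rw [hexp, Complex.norm_exp] at this
    simpa using this
  refine ⟨α.im / (2 * Real.pi), fun x => ?_⟩
  rw [hexp]
  congr 1
  rw [mul_div_cancel₀ _ (by positivity)]
  apply Complex.ext <;> simp [hre]

/-! ### The compact group of a Bohr almost periodic function -/

theorem approximation_of_factor {K : Type*} [NormedAddCommGroup K] [CompactSpace K]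
    (ι : ℝ →+ K) (hι : Continuous ι) (F : C(K, ℂ)) {ε : ℝ} (hε : 0 < ε) :
    ∃ (N : ℕ) (a : Fin N → ℂ) (θ : Fin N → ℝ),
      ∀ x : ℝ, ‖F (ι x) - ∑ i : Fin N, a i *
        Complex.exp (((2 * Real.pi * θ i * x : ℝ) : ℂ) * Complex.I)‖ ≤ ε := by
  obtain ⟨N, a, χ, h⟩ := exists_sum_characters_near F hε
  have hχ : ∀ i, ∃ θ : ℝ, ∀ x : ℝ, (χ i : C(K, ℂ)) (ι x) =
      Complex.exp (((2 * Real.pi * θ * x : ℝ) : ℂ) * Complex.I) := fun i =>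
    real_character_eq_exp ((χ i : C(K, ℂ)).continuous.comp hι)
      (fun x y => by rw [map_add]; exact (χ i).2.1 _ _) (fun x => (χ i).2.2 _)
  choose θ hθ using hχ
  refine ⟨N, a, θ, fun x => ?_⟩
  have h1 := (ContinuousMap.norm_coe_le_norm _ (ι x)).trans h.le
  simpa [ContinuousMap.sum_apply, hθ] using h1

theorem BohrAP.bounded {f : ℝ → ℂ} (hf : BohrAP f) : ∃ C, ∀ x, ‖f x‖ ≤ C := by
  obtain ⟨L, hL, h⟩ := hf.2 1 one_pos
  obtain ⟨C, hC⟩ := (isCompact_Icc (a := 0) (b := L)).exists_bound_of_continuousOn hf.1.continuousOn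
  refine ⟨C + 1, fun x => ?_⟩
  obtain ⟨τ, ⟨h1, h2⟩, hτ⟩ := h (x - L)
  have h3 := hC (x - τ) ⟨by linarith, by linarith⟩
  have h4 := norm_sub_norm_le (f x) (f (x - τ))
  rw [norm_sub_rev] at h4
  linarith [hτ x]

theorem BohrAP.uniformContinuous {f : ℝ → ℂ} (hf : BohrAP f) : UniformContinuous f := by
  rw [Metric.uniformContinuous_iff]
  intro ε hε
  obtain ⟨L, hL, h⟩ := hf.2 (ε / 3) (by positivity)
  obtain ⟨δ, hδ, hu⟩ := Metric.uniformContinuousOn_iff.1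
    ((isCompact_Icc (a := -1) (b := L + 1)).uniformContinuousOn_of_continuous hf.1.continuousOn)
    (ε / 3) (by positivity)
  refine ⟨min δ 1, by positivity, fun {x y} hxy => ?_⟩
  obtain ⟨τ, ⟨h1, h2⟩, hτ⟩ := h (x - L)
  rw [lt_min_iff, Real.dist_eq] at hxy
  obtain ⟨h3, h4⟩ := abs_lt.1 hxy.2
  have h5 := hu (x - τ) ⟨by linarith, by linarith⟩ (y - τ) ⟨by linarith, by linarith⟩
    (by rw [Real.dist_eq, sub_sub_sub_cancel_right]; exact hxy.1)
  have h6 := hτ x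
  have h7 := hτ y
  rw [← dist_eq_norm] at h6 h7
  rw [dist_comm] at h6
  linarith [dist_triangle4 (f x) (f (x - τ)) (f (y - τ)) (f y)]

/-- The seminorm `t ↦ sup_x |F (x + t) - F x|` on `ℝ`. -/
def translationSeminorm (F : BoundedContinuousFunction ℝ ℂ) : AddGroupSeminorm ℝ where
  toFun t := ‖F.compContinuous ⟨fun x => x + t, by fun_prop⟩ - F‖
  map_zero' := by
    rw [norm_eq_zero, sub_eq_zero]; ext x; simp
  add_le' s t := by
    refine (BoundedContinuousFunction.norm_le (by positivity)).2 fun x => ?_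
    have h1 := BoundedContinuousFunction.norm_coe_le_norm
      (F.compContinuous ⟨fun x => x + s, by fun_prop⟩ - F) (x + t)
    have h2 := BoundedContinuousFunction.norm_coe_le_norm
      (F.compContinuous ⟨fun x => x + t, by fun_prop⟩ - F) x
    have h3 := norm_add_le (F (x + t + s) - F (x + t)) (F (x + t) - F x)
    simp only [BoundedContinuousFunction.coe_sub, Pi.sub_apply,
      BoundedContinuousFunction.compContinuous_apply, ContinuousMap.coe_mk] at h1 h2 ⊢
    rw [sub_add_sub_cancel] at h3
    rw [← add_assoc, add_right_comm]
    exact h3.trans (add_le_add h1 h2)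
  neg' t := by
    have key : ∀ s : ℝ, ‖F.compContinuous ⟨fun x => x + -s, by fun_prop⟩ - F‖ ≤
        ‖F.compContinuous ⟨fun x => x + s, by fun_prop⟩ - F‖ := fun s => by
      refine (BoundedContinuousFunction.norm_le (by positivity)).2 fun x => ?_
      have h1 := BoundedContinuousFunction.norm_coe_le_norm
        (F.compContinuous ⟨fun x => x + s, by fun_prop⟩ - F) (x + -s)
      simp only [BoundedContinuousFunction.coe_sub, Pi.sub_apply,
        BoundedContinuousFunction.compContinuous_apply, ContinuousMap.coe_mk,
        neg_add_cancel_right] at h1 ⊢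
      rwa [norm_sub_rev]
    refine le_antisymm (key t) ?_
    have := key (-t)
    simpa only [neg_neg] using this

theorem norm_sub_le_translationSeminorm (F : BoundedContinuousFunction ℝ ℂ) (t x : ℝ) :
    ‖F (x + t) - F x‖ ≤ translationSeminorm F t :=
  BoundedContinuousFunction.norm_coe_le_norm
    (F.compContinuous ⟨fun x => x + t, by fun_prop⟩ - F) x

theorem translationSeminorm_le (F : BoundedContinuousFunction ℝ ℂ) {t C : ℝ}
    (h : ∀ x, ‖F (x + t) - F x‖ ≤ C) : translationSeminorm F t ≤ C :=
  (BoundedContinuousFunction.norm_le ((norm_nonneg _).trans (h 0))).2 h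

/-- The group `ℝ` with the (pseudo)metric given by the translation seminorm of `F`. Its completion
is the compact group through which an almost periodic `F` factors. -/
def TranslationGroup (_ : BoundedContinuousFunction ℝ ℂ) : Type := ℝ

instance (F : BoundedContinuousFunction ℝ ℂ) : AddCommGroup (TranslationGroup F) :=
  inferInstanceAs (AddCommGroup ℝ)

instance (F : BoundedContinuousFunction ℝ ℂ) : SeminormedAddCommGroup (TranslationGroup F) :=
  AddGroupSeminorm.toSeminormedAddCommGroup (E := TranslationGroup F) (translationSeminorm F)

/-- The identity map, from `ℝ` to `ℝ` with the translation seminorm. -/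
def toTranslationGroup (F : BoundedContinuousFunction ℝ ℂ) : ℝ →+ TranslationGroup F :=
  AddMonoidHom.id ℝ

theorem norm_toTranslationGroup (F : BoundedContinuousFunction ℝ ℂ) (t : ℝ) :
    ‖toTranslationGroup F t‖ = translationSeminorm F t := rfl

theorem approximation_of_bohrAP {f : ℝ → ℂ} (hf : BohrAP f) {ε : ℝ} (hε : 0 < ε) :
    ∃ (N : ℕ) (a : Fin N → ℂ) (θ : Fin N → ℝ),
      ∀ x : ℝ, ‖f x - ∑ i : Fin N, a i *
        Complex.exp (((2 * Real.pi * θ i * x : ℝ) : ℂ) * Complex.I)‖ ≤ ε := by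
  obtain ⟨C, hC⟩ := hf.bounded
  let F : BoundedContinuousFunction ℝ ℂ := .ofNormedAddCommGroup f hf.1 C hC
  let X := TranslationGroup F
  let j : ℝ →+ X := toTranslationGroup F
  have hj : Continuous j := by
    refine continuous_of_continuousAt_zero j (Metric.continuousAt_iff.2 fun ε hε => ?_)
    obtain ⟨δ, hδ, h⟩ := Metric.uniformContinuous_iff.1 hf.uniformContinuous (ε / 2) (by positivity)
    refine ⟨δ, hδ, fun {t} ht => ?_⟩
    rw [map_zero, dist_zero_right, norm_toTranslationGroup]
    refine (translationSeminorm_le F (C := ε / 2) fun x => ?_).trans_lt (by linarith)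
    have := h (a := x + t) (b := x) (by simpa [dist_eq_norm] using ht)
    rw [dist_eq_norm] at this
    exact this.le
  -- Modulo an `ε / 4`-almost period, every `j t` lies in the compact image of `[0, L]` under `j`.
  have htb : TotallyBounded (Set.univ : Set X) := by
    rw [Metric.totallyBounded_iff]
    intro ε hε
    obtain ⟨L, hL, h⟩ := hf.2 (ε / 4) (by positivity)
    obtain ⟨s, hs, hsL⟩ := Metric.totallyBounded_iff.1
      ((isCompact_Icc (a := 0) (b := L)).image hj).totallyBounded (ε / 2) (by positivity)
    refine ⟨s, hs, fun t _ => ?_⟩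
    obtain ⟨t, rfl⟩ : ∃ t', j t' = t := ⟨t, rfl⟩
    obtain ⟨τ, ⟨h1, h2⟩, hτ⟩ := h (t - L)
    have h3 := hsL ⟨t - τ, ⟨by linarith, by linarith⟩, rfl⟩
    simp only [Set.mem_iUnion, Metric.mem_ball] at h3 ⊢
    obtain ⟨y, hy, h4⟩ := h3
    refine ⟨y, hy, ?_⟩
    have h5 : dist (j t) (j (t - τ)) ≤ ε / 4 := by
      rw [dist_comm, dist_eq_norm, ← map_sub, norm_toTranslationGroup]
      refine translationSeminorm_le F fun x => ?_
      have := (hτ x).le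
      rwa [show t - τ - t = -τ by ring, ← sub_eq_add_neg]
    linarith [dist_triangle (j t) (j (t - τ)) y]
  let K := UniformSpace.Completion X
  have : CompactSpace K := by
    rw [← isCompact_univ_iff, ← UniformSpace.Completion.denseRange_coe.closure_range,
      ← Set.image_univ]
    exact (htb.image (UniformSpace.Completion.uniformContinuous_coe X)).closure.isCompact_of_isClosed
      isClosed_closure
  have key : ∀ x y : ℝ, ‖f x - f y‖ ≤ translationSeminorm F (x - y) := fun x y => by
    have := norm_sub_le_translationSeminorm F (x - y) y
    rwa [add_sub_cancel] at this
  let g : X → ℂ := f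
  have hg : UniformContinuous g := by
    refine LipschitzWith.uniformContinuous (K := 1) (LipschitzWith.of_dist_le_mul fun x y => ?_)
    rw [NNReal.coe_one, one_mul, dist_eq_norm, dist_eq_norm]
    exact key x y
  let G : C(K, ℂ) := ⟨UniformSpace.Completion.extension g,
    UniformSpace.Completion.continuous_extension⟩
  have hG : ∀ x, G (UniformSpace.Completion.toCompl (j x)) = f x := fun x =>
    UniformSpace.Completion.extension_coe hg _
  have := approximation_of_factor ((UniformSpace.Completion.toCompl : X →+ K).comp j)
    ((UniformSpace.Completion.continuous_coe X).comp hj) G hε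
  simpa only [AddMonoidHom.comp_apply, hG] using this

/-! ### Trigonometric polynomials are almost periodic -/

/-- Finitely many exponentials have a relatively dense set of common almost periods: if the points
`e c` (`c` in a finite set bounded by `R`) are a `δ`-net of the orbit, then any `t` minus a suitable
`c` is one, so intervals of length `2 * R` suffice. -/
theorem exists_common_almostPeriod {N : ℕ} (θ : Fin N → ℝ) {δ : ℝ} (hδ : 0 < δ) :
    ∃ L : ℝ, 0 < L ∧ ∀ a : ℝ, ∃ τ ∈ Set.Icc a (a + L), ∀ (i : Fin N) (x : ℝ),
      ‖Complex.exp (((2 * Real.pi * θ i * (x - τ) : ℝ) : ℂ) * Complex.I) -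
        Complex.exp (((2 * Real.pi * θ i * x : ℝ) : ℂ) * Complex.I)‖ < δ := by
  let e : ℝ → Fin N → ℂ := fun t i => Complex.exp (((2 * Real.pi * θ i * t : ℝ) : ℂ) * Complex.I)
  have htb : TotallyBounded (Set.range e) := by
    refine (isCompact_closedBall (0 : Fin N → ℂ) 1).totallyBounded.subset ?_
    rintro _ ⟨t, rfl⟩
    rw [mem_closedBall_zero_iff, pi_norm_le_iff_of_nonneg zero_le_one]
    exact fun i => (Complex.norm_exp_ofReal_mul_I _).le
  obtain ⟨s, hsr, hs, hcov⟩ := Metric.finite_approx_of_totallyBounded htb δ hδ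
  obtain ⟨R, hR, hbd⟩ := (hs.image (Function.invFun e)).isBounded.exists_pos_norm_le
  refine ⟨2 * R, by positivity, fun a => ?_⟩
  have h1 := hcov ⟨a + R, rfl⟩
  simp only [Set.mem_iUnion] at h1
  obtain ⟨y, hy, h2⟩ := h1
  set c := Function.invFun e y
  have hec : e c = y := Function.invFun_eq (hsr hy)
  have h3 : |c| ≤ R := hbd c ⟨y, hy, rfl⟩
  obtain ⟨h4, h5⟩ := abs_le.1 h3
  refine ⟨a + R - c, ⟨by linarith, by linarith⟩, fun i x => ?_⟩
  rw [← hec, mem_ball_iff_norm'] at h2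
  have hmul : ∀ u v w : ℝ, u + v = w → Complex.exp (((2 * Real.pi * θ i * w : ℝ) : ℂ) * Complex.I)
      = e u i * e v i := by
    rintro u v _ rfl
    simp only [e]
    rw [← Complex.exp_add]
    congr 1; push_cast; ring
  rw [hmul (x - (a + R)) c _ (by ring), hmul (x - (a + R)) (a + R) _ (by ring), ← mul_sub, norm_mul,
    Complex.norm_exp_ofReal_mul_I, one_mul]
  exact (norm_le_pi_norm (e c - e (a + R)) i).trans_lt h2

theorem bohrAP_trigPoly {N : ℕ} (a : Fin N → ℂ) (θ : Fin N → ℝ) :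
    BohrAP fun x => ∑ i : Fin N, a i *
      Complex.exp (((2 * Real.pi * θ i * x : ℝ) : ℂ) * Complex.I) := by
  refine ⟨by fun_prop, fun ε hε => ?_⟩
  have hS : 0 < ∑ i, ‖a i‖ + 1 := by positivity
  obtain ⟨L, hL, h⟩ := exists_common_almostPeriod θ (div_pos hε hS)
  refine ⟨L, hL, fun b => ?_⟩
  obtain ⟨τ, hτ, h⟩ := h b
  refine ⟨τ, hτ, fun x => ?_⟩
  simp_rw [← Finset.sum_sub_distrib, ← mul_sub]
  calc _ ≤ ∑ i, ‖a i‖ * (ε / (∑ i, ‖a i‖ + 1)) := by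
        refine norm_sum_le_of_le _ fun i _ => ?_
        rw [norm_mul]
        exact mul_le_mul_of_nonneg_left (h i x).le (norm_nonneg _)
    _ < ε := by
        rw [← Finset.sum_mul, mul_div_assoc', div_lt_iff₀ hS]
        nlinarith

theorem bohrAP_of_forall_near {f : ℝ → ℂ}
    (h : ∀ ε : ℝ, 0 < ε → ∃ g, BohrAP g ∧ ∀ x, ‖f x - g x‖ ≤ ε) : BohrAP f := by
  constructor
  · refine continuous_of_uniform_approx_of_continuous fun U hU => ?_
    obtain ⟨ε, hε, hεU⟩ := Metric.mem_uniformity_dist.1 hU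
    obtain ⟨g, hg, hfg⟩ := h (ε / 2) (by positivity)
    exact ⟨g, hg.1, fun x => hεU (by rw [dist_eq_norm]; linarith [hfg x])⟩
  · intro ε hε
    obtain ⟨g, hg, hfg⟩ := h (ε / 4) (by positivity)
    obtain ⟨L, hL, hg⟩ := hg.2 (ε / 2) (by positivity)
    refine ⟨L, hL, fun a => (hg a).imp fun τ hτ => ⟨hτ.1, fun x => ?_⟩⟩
    have h1 := hfg (x - τ)
    have h2 := hτ.2 x
    have h3 := hfg x
    rw [← dist_eq_norm] at h1 h2 h3 ⊢
    rw [dist_comm] at h3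
    linarith [dist_triangle4 (f (x - τ)) (g (x - τ)) (g x) (f x)]

/-- Bohr almost periodicity is equivalent to the approximation property by
trigonometric polynomials. -/
theorem bohrAP_iff_approximation (f : ℝ → ℂ) :
    BohrAP f ↔
      ∀ ε : ℝ, 0 < ε → ∃ (N : ℕ) (a : Fin N → ℂ) (θ : Fin N → ℝ),
        ∀ x : ℝ, ‖f x - ∑ i : Fin N, a i *
          Complex.exp (((2 * Real.pi * θ i * x : ℝ) : ℂ) * Complex.I)‖ ≤ ε := by
  refine ⟨fun hf ε hε => approximation_of_bohrAP hf hε, fun h => bohrAP_of_forall_near ?_⟩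
  intro ε hε
  obtain ⟨N, a, θ, h⟩ := h ε hε
  exact ⟨_, bohrAP_trigPoly a θ, h⟩
end
end

section
/- For every real p with 2 ≤ p < ∞ there exists a constant C = C(p) > 0, independent of the interval, such that the following Gagliardo–Nirenberg inequality holds: for every interval I ⊂ ℝ of length |I| ≥ 1 and every function φ : ℝ → ℂ which on I has a weak derivative φ′ with φ, φ′ square-integrable on I, one has ( ∫_I |φ(x)|^p dx )^{1/p} ≤ C ( ∫_I |φ(x)|² dx )^{(1/2)(1/2 + 1/p)} ( ∫_I (|φ(x)|² + |φ′(x)|²) dx )^{(1/2)(1/2 − 1/p)}. -/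
/-!
The inequality is interpolation between `L²` and `L^∞`. By Cauchy–Schwarz, `φ` is Hölder continuous
of order `1/2`: `|φ(x) - φ(y)|² ≤ δ ∫ |φ'|²` whenever `x, y` lie in a subinterval of length `δ`
(`gn_holder`). Averaging over `y` in such a subinterval, which exists for every `δ ≤ 1` because the
interval has length at least one, gives `δ |φ(x)|² ≤ 2 ∫ |φ|² + 2 δ² ∫ |φ'|²` (`gn_average`).
Writing `A = ∫ |φ|²` and `B = ∫ (|φ|² + |φ'|²)`, the choice `δ = (A / B)^{1/2} ≤ 1` yields the
sup bound `|φ|² ≤ 4 A^{1/2} B^{1/2}` (`gn_sup`). Finally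
`∫ |φ|^p ≤ sup (|φ|²)^{(p-2)/2} · ∫ |φ|²`, and taking `p`-th roots gives the claim with
`C = 4^{(p-2)/(2p)}`.
-/

open MeasureTheory Filter Topology
open scoped ENNReal NNReal

noncomputable section

/-- Cauchy–Schwarz for the increment of `φ` over a subinterval of length `δ`. -/
lemma gn_holder {a b : ℝ} {φ φ' : ℝ → ℂ}
    (hm : AEStronglyMeasurable φ' (volume.restrict (Set.Ioo a b)))
    (hφ : ∀ x ∈ Set.Ioo a b, ∀ x₀ ∈ Set.Ioo a b, φ x = φ x₀ + ∫ y in x₀..x, φ' y)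
    {x y δ : ℝ} (hx : x ∈ Set.Ioo a b) (hy : y ∈ Set.Ioo a b) (hxy : |x - y| ≤ δ) :
    (‖φ x - φ y‖ₑ) ^ (2:ℝ) ≤
      ENNReal.ofReal δ * ∫⁻ t in Set.Ioo a b, ‖φ' t‖ₑ ^ (2:ℝ) := by
  have hsub : Set.uIoc y x ⊆ Set.Ioo a b :=
    Set.uIoc_subset_uIcc.trans (Set.OrdConnected.uIcc_subset inferInstance hy hx)
  have hm' : AEMeasurable (fun t => ‖φ' t‖ₑ) (volume.restrict (Set.uIoc y x)) :=
    (hm.mono_measure (Measure.restrict_mono hsub le_rfl)).enorm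
  have h1 : ‖φ x - φ y‖ₑ ≤ ∫⁻ t in Set.uIoc y x, ‖φ' t‖ₑ := by
    have h : φ x - φ y = ∫ t in y..x, φ' t := by rw [hφ x hx y hy]; ring
    have h2 : ‖∫ t in y..x, φ' t‖ₑ = ‖∫ t in Set.uIoc y x, φ' t‖ₑ := by
      rw [← ofReal_norm, ← ofReal_norm, intervalIntegral.norm_intervalIntegral_eq]
    rw [h, h2]
    exact enorm_integral_le_lintegral_enorm _
  have h2 := ENNReal.lintegral_mul_le_Lp_mul_Lq (volume.restrict (Set.uIoc y x))
    Real.HolderConjugate.two_two (f := fun _ => (1 : ℝ≥0∞)) aemeasurable_const hm'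
  simp only [Pi.mul_apply, one_mul, ENNReal.one_rpow, lintegral_const, Measure.restrict_apply_univ] at h2
  calc (‖φ x - φ y‖ₑ) ^ (2:ℝ)
      ≤ (volume (Set.uIoc y x) ^ (1 / 2 : ℝ) *
          (∫⁻ t in Set.uIoc y x, ‖φ' t‖ₑ ^ (2:ℝ)) ^ (1 / 2 : ℝ)) ^ (2:ℝ) :=
        ENNReal.rpow_le_rpow (h1.trans h2) (by norm_num)
    _ = volume (Set.uIoc y x) * ∫⁻ t in Set.uIoc y x, ‖φ' t‖ₑ ^ (2:ℝ) := by
        rw [ENNReal.mul_rpow_of_nonneg _ _ (by norm_num), ← ENNReal.rpow_mul, ← ENNReal.rpow_mul]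
        norm_num
    _ ≤ _ := by
        gcongr
        rw [Real.volume_uIoc]
        exact ENNReal.ofReal_le_ofReal hxy

/-- The average of `|φ(x)|² ≤ 2 |φ(y)|² + 2 |φ(x) - φ(y)|²` over `y` in a subinterval of length `δ`
whose closure contains `x`. -/
lemma gn_average {a b : ℝ} {φ φ' : ℝ → ℂ}
    (hm : AEStronglyMeasurable φ' (volume.restrict (Set.Ioo a b)))
    (hφ : ∀ x ∈ Set.Ioo a b, ∀ x₀ ∈ Set.Ioo a b, φ x = φ x₀ + ∫ y in x₀..x, φ' y)
    (hab : a + 1 ≤ b) {x δ : ℝ} (hx : x ∈ Set.Ioo a b) (hδ0 : 0 ≤ δ) (hδ : δ ≤ 1) :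
    ENNReal.ofReal δ * ‖φ x‖ₑ ^ (2:ℝ) ≤
      2 * (∫⁻ t in Set.Ioo a b, ‖φ t‖ₑ ^ (2:ℝ)) +
      2 * (ENNReal.ofReal δ * (ENNReal.ofReal δ * ∫⁻ t in Set.Ioo a b, ‖φ' t‖ₑ ^ (2:ℝ))) := by
  obtain ⟨hxa, hxb⟩ := hx
  set D := ∫⁻ t in Set.Ioo a b, ‖φ' t‖ₑ ^ (2:ℝ)
  obtain ⟨l, hl1, hl2, hl3, hl4⟩ : ∃ l, a ≤ l ∧ l + δ ≤ b ∧ l ≤ x ∧ x ≤ l + δ := by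
    refine ⟨max a (x - δ), le_max_left _ _, ?_, ?_, ?_⟩
    · rw [← le_sub_iff_add_le]; exact max_le (by linarith) (by linarith)
    · exact max_le hxa.le (by linarith)
    · linarith [le_max_right a (x - δ)]
  have hJ : Set.Ioo l (l + δ) ⊆ Set.Ioo a b := Set.Ioo_subset_Ioo hl1 hl2
  have hvol : volume (Set.Ioo l (l + δ)) = ENNReal.ofReal δ := by
    rw [Real.volume_Ioo]; congr 1; ring
  have hpt : ∀ y ∈ Set.Ioo l (l + δ),
      ‖φ x‖ₑ ^ (2:ℝ) ≤ 2 * ‖φ y‖ₑ ^ (2:ℝ) + 2 * (ENNReal.ofReal δ * D) := by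
    intro y hy
    have h1 := gn_holder hm hφ ⟨hxa, hxb⟩ (hJ hy) (δ := δ)
      (abs_le.2 ⟨by linarith [hy.2], by linarith [hy.1]⟩)
    have h2 : ‖φ x‖ₑ ≤ ‖φ y‖ₑ + ‖φ x - φ y‖ₑ := by
      simpa using enorm_add_le (φ y) (φ x - φ y)
    have h3 := ENNReal.rpow_add_le_mul_rpow_add_rpow ‖φ y‖ₑ ‖φ x - φ y‖ₑ
      (p := 2) (by norm_num)
    calc ‖φ x‖ₑ ^ (2:ℝ) ≤ (‖φ y‖ₑ + ‖φ x - φ y‖ₑ) ^ (2:ℝ) :=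
          ENNReal.rpow_le_rpow h2 (by norm_num)
      _ ≤ 2 * (‖φ y‖ₑ ^ (2:ℝ) + ‖φ x - φ y‖ₑ ^ (2:ℝ)) := by
          refine h3.trans_eq ?_
          norm_num
      _ ≤ _ := by rw [mul_add]; gcongr
  calc ENNReal.ofReal δ * ‖φ x‖ₑ ^ (2:ℝ)
      = ∫⁻ _ in Set.Ioo l (l + δ), ‖φ x‖ₑ ^ (2:ℝ) := by
        rw [setLIntegral_const, hvol, mul_comm]
    _ ≤ ∫⁻ y in Set.Ioo l (l + δ), (2 * ‖φ y‖ₑ ^ (2:ℝ) + 2 * (ENNReal.ofReal δ * D)) :=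
        setLIntegral_mono' measurableSet_Ioo hpt
    _ = 2 * (∫⁻ y in Set.Ioo l (l + δ), ‖φ y‖ₑ ^ (2:ℝ)) +
          2 * (ENNReal.ofReal δ * (ENNReal.ofReal δ * D)) := by
        rw [lintegral_add_right _ measurable_const, setLIntegral_const, hvol,
          lintegral_const_mul' _ _ (by norm_num)]
        ring
    _ ≤ _ := by
        gcongr

/-- The sup bound, from `gn_average` with `δ = (A / B)^{1/2}`. -/
lemma gn_sup {a b : ℝ} {φ φ' : ℝ → ℂ}
    (hm : AEStronglyMeasurable φ' (volume.restrict (Set.Ioo a b)))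
    (hφ : ∀ x ∈ Set.Ioo a b, ∀ x₀ ∈ Set.Ioo a b, φ x = φ x₀ + ∫ y in x₀..x, φ' y)
    (hab : a + 1 ≤ b) {x : ℝ} (hx : x ∈ Set.Ioo a b) {A B : ℝ≥0∞}
    (hA : ∫⁻ t in Set.Ioo a b, ‖φ t‖ₑ ^ (2:ℝ) = A)
    (hD : ∫⁻ t in Set.Ioo a b, ‖φ' t‖ₑ ^ (2:ℝ) ≤ B)
    (hAB : A ≤ B) (hA0 : A ≠ 0) (hB : B ≠ ⊤) :
    ‖φ x‖ₑ ^ (2:ℝ) ≤ 4 * A ^ (1/2 : ℝ) * B ^ (1/2 : ℝ) := by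
  have hAt : A ≠ ⊤ := ne_top_of_le_ne_top hB hAB
  have hB0 : B ≠ 0 := fun h => hA0 (le_antisymm (h ▸ hAB) zero_le)
  set d : ℝ≥0∞ := (A / B) ^ (1/2 : ℝ) with hd
  have hd1 : d ≤ 1 := by
    rw [hd, ← ENNReal.one_rpow (1/2 : ℝ)]
    exact ENNReal.rpow_le_rpow (ENNReal.div_le_of_le_mul (by simpa using hAB)) (by norm_num)
  have hdt : d ≠ ⊤ := ne_top_of_le_ne_top ENNReal.one_ne_top hd1
  have hd0 : d ≠ 0 := by
    rw [hd]
    exact (ENNReal.rpow_pos (ENNReal.div_pos hA0 hB) (ENNReal.div_ne_top hAt hB0)).ne'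
  have hdB : d * B ^ (1/2 : ℝ) = A ^ (1/2 : ℝ) := by
    rw [hd, ← ENNReal.mul_rpow_of_nonneg _ _ (by norm_num), ENNReal.div_mul_cancel hB0 hB]
  have hsq : ∀ z : ℝ≥0∞, z ^ (1/2 : ℝ) * z ^ (1/2 : ℝ) = z := by
    intro z
    rw [← ENNReal.rpow_add_of_nonneg _ _ (by norm_num) (by norm_num)]
    norm_num
  have hddB : d * (d * B) = A := by
    conv_lhs => rw [← hsq B]
    rw [show d * (d * (B ^ (1/2 : ℝ) * B ^ (1/2 : ℝ))) =
      (d * B ^ (1/2 : ℝ)) * (d * B ^ (1/2 : ℝ)) by ring, hdB, hsq]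
  have key := gn_average hm hφ hab hx (δ := d.toReal) ENNReal.toReal_nonneg
    (ENNReal.toReal_le_of_le_ofReal (by norm_num) (by simpa using hd1))
  rw [ENNReal.ofReal_toReal hdt, hA] at key
  have h4 : d * ‖φ x‖ₑ ^ (2:ℝ) ≤ d * (4 * A ^ (1/2 : ℝ) * B ^ (1/2 : ℝ)) := by
    calc d * ‖φ x‖ₑ ^ (2:ℝ) ≤ 2 * A + 2 * (d * (d * B)) := key.trans (by gcongr)
      _ = 4 * (A ^ (1/2 : ℝ) * A ^ (1/2 : ℝ)) := by rw [hddB, hsq]; ring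
      _ = 4 * (A ^ (1/2 : ℝ) * (d * B ^ (1/2 : ℝ))) := by rw [hdB]
      _ = _ := by ring
  exact (ENNReal.mul_le_mul_iff_right hd0 hdt).1 h4

/-- Gagliardo–Nirenberg inequality on intervals of length at least one,
with a constant independent of the interval. -/
theorem gagliardo_nirenberg_interval (p : ℝ) (hp2 : 2 ≤ p) :
    ∃ C : ℝ, 0 < C ∧ ∀ a b : ℝ, a + 1 ≤ b → ∀ φ φ' : ℝ → ℂ,
      LocallyIntegrableOn φ' (Set.Ioo a b) →
      (∀ x ∈ Set.Ioo a b, ∀ x₀ ∈ Set.Ioo a b, φ x = φ x₀ + ∫ y in x₀..x, φ' y) →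
      (∫⁻ x in Set.Ioo a b, (‖φ x‖₊ : ℝ≥0∞) ^ (2:ℝ)) ≠ ⊤ →
      (∫⁻ x in Set.Ioo a b, (‖φ' x‖₊ : ℝ≥0∞) ^ (2:ℝ)) ≠ ⊤ →
      (∫⁻ x in Set.Ioo a b, (‖φ x‖₊ : ℝ≥0∞) ^ p) ^ (1/p) ≤
        ENNReal.ofReal C *
          (∫⁻ x in Set.Ioo a b, (‖φ x‖₊ : ℝ≥0∞) ^ (2:ℝ)) ^ ((1/2) * (1/2 + 1/p)) *
          (∫⁻ x in Set.Ioo a b,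
            ((‖φ x‖₊ : ℝ≥0∞) ^ (2:ℝ) + (‖φ' x‖₊ : ℝ≥0∞) ^ (2:ℝ))) ^ ((1/2) * (1/2 - 1/p)) := by
  have hp0 : 0 < p := by linarith
  refine ⟨4 ^ ((p - 2) / 2 * (1 / p)), by positivity, ?_⟩
  intro a b hab φ φ' hloc hφ hA hD
  have hm : AEStronglyMeasurable φ' (volume.restrict (Set.Ioo a b)) := hloc.aestronglyMeasurable
  simp only [← enorm_eq_nnnorm] at hA hD ⊢
  set A := ∫⁻ x in Set.Ioo a b, ‖φ x‖ₑ ^ (2:ℝ) with hAdef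
  set B := ∫⁻ x in Set.Ioo a b, (‖φ x‖ₑ ^ (2:ℝ) + ‖φ' x‖ₑ ^ (2:ℝ)) with hBdef
  have hBeq : B = A + ∫⁻ x in Set.Ioo a b, ‖φ' x‖ₑ ^ (2:ℝ) :=
    lintegral_add_right' _ (hm.enorm.pow_const _)
  have hB : B ≠ ⊤ := by rw [hBeq]; exact ENNReal.add_ne_top.2 ⟨hA, hD⟩
  have hAB : A ≤ B := by rw [hBeq]; exact le_self_add
  have hDB : ∫⁻ x in Set.Ioo a b, ‖φ' x‖ₑ ^ (2:ℝ) ≤ B := by rw [hBeq]; exact le_add_self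
  have hsplit : ∀ x, ‖φ x‖ₑ ^ p = (‖φ x‖ₑ ^ (2:ℝ)) ^ ((p - 2) / 2) * ‖φ x‖ₑ ^ (2:ℝ) := by
    intro x
    rw [← ENNReal.rpow_mul, ← ENNReal.rpow_add_of_nonneg _ _ (by linarith) (by norm_num)]
    congr 1; ring
  -- A uniform bound of the form `|φ|² ≤ M` on the interval bounds the `p`-th power integral.
  have hint : ∀ M : ℝ≥0∞, M ≠ ⊤ → (∀ x ∈ Set.Ioo a b, ‖φ x‖ₑ ^ (2:ℝ) ≤ M) →
      ∫⁻ x in Set.Ioo a b, ‖φ x‖ₑ ^ p ≤ M ^ ((p - 2) / 2) * A := by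
    intro M hM hb
    rw [hAdef, ← lintegral_const_mul' _ _ (ENNReal.rpow_ne_top_of_nonneg (by linarith) hM)]
    refine setLIntegral_mono' measurableSet_Ioo fun x hx => ?_
    rw [hsplit x]
    gcongr
    exact hb x hx
  rcases eq_or_ne A 0 with hA0 | hA0
  · -- `φ` is bounded on the interval, by the averaging lemma with `δ = 1`.
    have h := hint (2 * A + 2 * ∫⁻ x in Set.Ioo a b, ‖φ' x‖ₑ ^ (2:ℝ))
      (ENNReal.add_ne_top.2 ⟨ENNReal.mul_ne_top (by norm_num) hA,
        ENNReal.mul_ne_top (by norm_num) hD⟩)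
      (fun x hx => by simpa [hAdef] using gn_average hm hφ hab hx (δ := 1) (by norm_num) le_rfl)
    rw [hA0, mul_zero] at h
    rw [nonpos_iff_eq_zero.1 h, ENNReal.zero_rpow_of_pos (by positivity)]
    exact zero_le
  · have h := hint (4 * A ^ (1/2 : ℝ) * B ^ (1/2 : ℝ))
      (by
        refine ENNReal.mul_ne_top (ENNReal.mul_ne_top (by norm_num) ?_) ?_ <;>
        exact ENNReal.rpow_ne_top_of_nonneg (by norm_num) (by assumption))
      (fun x hx => gn_sup hm hφ hab hx rfl hDB hAB hA0 hB)
    have hr : 0 ≤ (p - 2) / 2 := by linarith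
    have hq : 0 ≤ 1 / p := by positivity
    refine (ENNReal.rpow_le_rpow h hq).trans_eq ?_
    rw [ENNReal.mul_rpow_of_nonneg _ _ hq, ENNReal.mul_rpow_of_nonneg _ _ hr,
      ENNReal.mul_rpow_of_nonneg _ _ hr, ENNReal.mul_rpow_of_nonneg _ _ hq,
      ENNReal.mul_rpow_of_nonneg _ _ hq, ← ENNReal.rpow_mul, ← ENNReal.rpow_mul,
      ← ENNReal.rpow_mul, ← ENNReal.rpow_mul, ← ENNReal.rpow_mul,
      ← ENNReal.ofReal_rpow_of_pos (by norm_num : (0:ℝ) < 4)]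
    have e1 : (1/2 : ℝ) * (1/2 + 1/p) = 1/2 * ((p - 2) / 2 * (1/p)) + 1/p := by
      field_simp
      ring
    have e2 : (1/2 : ℝ) * (1/2 - 1/p) = 1/2 * ((p - 2) / 2 * (1/p)) := by
      field_simp
    rw [e1, e2, ENNReal.rpow_add _ _ hA0 hA, show ENNReal.ofReal 4 = 4 by norm_num]
    ring
end
end

section
/- Let k ≥ 1 be an integer, ε > 0, C > 0, ω ∈ ℝ \ {0}, and set L_j := j!/|ω| for j ∈ ℕ. Let f and f_j (j ∈ ℕ) be functions ℝ → ℂ, each with a weak derivative and finite S^{1,2}-norm, such that ‖f_j − f‖_{S^{1,2}} → 0 as j → ∞ and there is j₀ ∈ ℕ with ‖f_j − f_{j−1}‖_{S^{1,2}} ≤ C e^{−L_j^{2k+ε}} for all j ≥ j₀. Then there exist B > 0 and J ∈ ℕ such that e^{L_{j+1}^{2k+ε}} ‖f_j − f‖_{S^{1,2}} ≤ B for all j ≥ J. -/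
/-!
Write `d j` for the `S^{1,2}`-distance from `f_j` to `f`, `p = 2k + ε` and `e j = exp (-L_j ^ p)`.
The triangle inequality (`S12_sub_le`, which is Minkowski's inequality in `L²` for the pair
`(f, f')`) gives `d j ≤ C * e (j+1) + d (j+1)`. Since `L_{j+1} = (j+1) * L_j` and `p ≥ 1`, one has
`L_{j+1} ^ p ≥ L_j ^ p + 1` once `j ≥ 1` and `L_j ≥ 1`, so `e` eventually at least halves at each step
(`exp_decay_halves`). Summing the resulting geometric series gives
`d j ≤ 2 * C * e (j+1) + d (j+n)` for every `n`, and `n → ∞` yields the claim with `B = 2 * C`.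
-/

open MeasureTheory Filter Topology
open scoped ENNReal NNReal

noncomputable section

lemma HasWeakDeriv.continuous {f f' : ℝ → ℂ} (h : HasWeakDeriv f f') : Continuous f := by
  have hc : Continuous fun x => f 0 + ∫ y in (0:ℝ)..x, f' y :=
    continuous_const.add (intervalIntegral.continuous_primitive
      (fun a b => (h.1.integrableOn_isCompact isCompact_uIcc).intervalIntegrable) 0)
  rwa [← funext h.2] at hc

/-- Each integral in the definition of `S12` is the `L²` norm on a unit interval of the map
`x ↦ (f x, f' x)` into the Hilbert sum `ℂ ⊕ ℂ`. -/
lemma lintegral_eq_eLpNorm (f f' : ℝ → ℂ) (μ : Measure ℝ) :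
    (∫⁻ x, ((‖f x‖₊ : ℝ≥0∞) ^ 2 + (‖f' x‖₊ : ℝ≥0∞) ^ 2) ∂μ) ^ (1/2 : ℝ) =
      eLpNorm (fun x => WithLp.toLp 2 (f x, f' x)) 2 μ := by
  rw [eLpNorm_eq_lintegral_rpow_enorm_toReal (by norm_num) (by norm_num)]
  congr 1
  refine lintegral_congr fun x => ?_
  have h : ‖WithLp.toLp 2 (f x, f' x)‖₊ ^ 2 = ‖f x‖₊ ^ 2 + ‖f' x‖₊ ^ 2 := by
    apply NNReal.coe_injective
    push_cast
    exact WithLp.prod_norm_sq_eq_of_L2 _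
  have h2 : ‖WithLp.toLp 2 (f x, f' x)‖ₑ ^ (2 : ℕ) =
      (‖f x‖₊ : ℝ≥0∞) ^ 2 + (‖f' x‖₊ : ℝ≥0∞) ^ 2 := by
    rw [enorm_eq_nnnorm]
    exact_mod_cast congrArg ((↑) : ℝ≥0 → ℝ≥0∞) h
  rw [← h2, ENNReal.toReal_ofNat, ENNReal.rpow_ofNat]

/-- Triangle inequality for the `S^{1,2}`-distance. -/
lemma S12_sub_le {u u' v v' w w' : ℝ → ℂ} (hu : HasWeakDeriv u u') (hv : HasWeakDeriv v v')
    (hw : HasWeakDeriv w w') :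
    S12 (fun x => u x - w x) (fun x => u' x - w' x) ≤
      S12 (fun x => v x - u x) (fun x => v' x - u' x) +
      S12 (fun x => v x - w x) (fun x => v' x - w' x) := by
  refine iSup_le fun y => ?_
  refine le_trans ?_ (add_le_add (le_iSup _ y) (le_iSup _ y))
  simp only [lintegral_eq_eLpNorm]
  set μ := volume.restrict (Set.Ioc y (y + 1))
  have meas : ∀ {a a' b b' : ℝ → ℂ}, HasWeakDeriv a a' → HasWeakDeriv b b' →
      AEStronglyMeasurable (fun x => WithLp.toLp 2 (a x - b x, a' x - b' x)) μ := by
    intro a a' b b' ha hb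
    refine (WithLp.prod_continuous_toLp 2 ℂ ℂ).comp_aestronglyMeasurable ?_
    exact ((ha.continuous.sub hb.continuous).aestronglyMeasurable).prodMk
      (ha.1.aestronglyMeasurable.sub hb.1.aestronglyMeasurable).restrict
  have e : (fun x => WithLp.toLp 2 (u x - w x, u' x - w' x)) =
      (fun x => WithLp.toLp 2 (v x - w x, v' x - w' x)) -
      (fun x => WithLp.toLp 2 (v x - u x, v' x - u' x)) := by
    funext x
    simp only [Pi.sub_apply, ← WithLp.toLp_sub, Prod.mk_sub_mk]
    congr 2 <;> ring
  rw [e, add_comm]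
  exact eLpNorm_sub_le (meas hv hw) (meas hv hu) (by norm_num)

/-- If `b ≥ 2 a` with `a ≥ 1` and `p ≥ 1`, then `b ^ p ≥ a ^ p + 1`, so that `exp (-b ^ p)` is at
most half of `exp (-a ^ p)`. -/
lemma exp_decay_halves {a b p : ℝ} (ha : 1 ≤ a) (hb : 2 * a ≤ b) (hp : 1 ≤ p) :
    2 * Real.exp (-b ^ p) ≤ Real.exp (-a ^ p) := by
  have h1 : 1 ≤ a ^ p := Real.one_le_rpow ha (by linarith)
  have h2 : (2 : ℝ) ≤ 2 ^ p := Real.self_le_rpow_of_one_le (by norm_num) hp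
  have h3 : (2 * a) ^ p ≤ b ^ p := Real.rpow_le_rpow (by linarith) hb (by linarith)
  rw [Real.mul_rpow (by norm_num) (by linarith)] at h3
  have h4 : a ^ p + 1 ≤ b ^ p := by nlinarith
  have h5 : (2 : ℝ) ≤ Real.exp 1 := by linarith [Real.add_one_le_exp (1 : ℝ)]
  calc 2 * Real.exp (-b ^ p) ≤ Real.exp 1 * Real.exp (-b ^ p) := by gcongr
    _ = Real.exp (1 + -b ^ p) := (Real.exp_add _ _).symm
    _ ≤ Real.exp (-a ^ p) := Real.exp_le_exp.2 (by linarith)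

/-- Summation of increments that at least halve at each step, for a sequence tending to `0`. -/
lemma le_two_mul_of_halving {d : ℕ → ℝ≥0∞} {c : ℕ → ℝ≥0∞} {J : ℕ}
    (hd : Tendsto d atTop (𝓝 0)) (hstep : ∀ j ≥ J, d j ≤ c j + d (j + 1))
    (hc : ∀ j ≥ J, 2 * c (j + 1) ≤ c j) : ∀ j ≥ J, d j ≤ 2 * c j := by
  have key : ∀ n, ∀ j ≥ J, d j ≤ 2 * c j + d (n + j) := by
    intro n
    induction n with
    | zero => intro j _; simp
    | succ n ih =>
      intro j hj
      calc d j ≤ c j + d (j + 1) := hstep j hj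
        _ ≤ c j + (2 * c (j + 1) + d (n + (j + 1))) := by gcongr; exact ih _ (by omega)
        _ ≤ c j + (c j + d (n + (j + 1))) := by gcongr; exact hc j hj
        _ = 2 * c j + d (n + 1 + j) := by
          rw [two_mul, add_assoc, show n + (j + 1) = n + 1 + j by omega]
  intro j hj
  have ht : Tendsto (fun n => 2 * c j + d (n + j)) atTop (𝓝 (2 * c j + 0)) :=
    tendsto_const_nhds.add (hd.comp (tendsto_add_atTop_nat j))
  rw [add_zero] at ht
  exact ge_of_tendsto' ht fun n => key n j hj

/-- fast decay of consecutive differences of the periodizations implies the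
convergence-rate condition (1.13). -/
theorem rate_condition_of_consecutive_decay (k : ℕ) (hk : 1 ≤ k) (ε C : ℝ)
    (hε : 0 < ε) (hC : 0 < C) (ω : ℝ) (hω : ω ≠ 0)
    (L : ℕ → ℝ) (hL : ∀ j : ℕ, L j = (Nat.factorial j : ℝ) / |ω|)
    (f f' : ℝ → ℂ) (fj fj' : ℕ → ℝ → ℂ)
    (hwd : HasWeakDeriv f f') (hfin : S12 f f' ≠ ⊤)
    (hwdj : ∀ j, HasWeakDeriv (fj j) (fj' j))
    (hfinj : ∀ j, S12 (fj j) (fj' j) ≠ ⊤)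
    (hconv : Tendsto (fun j => S12 (fun x => fj j x - f x) (fun x => fj' j x - f' x))
      atTop (nhds 0))
    (j₀ : ℕ)
    (hdiff : ∀ j ≥ j₀, S12 (fun x => fj (j+1) x - fj j x) (fun x => fj' (j+1) x - fj' j x)
      ≤ ENNReal.ofReal (C * Real.exp (-(L (j+1) ^ ((2 * k : ℝ) + ε))))) :
    ∃ B : ℝ, 0 < B ∧ ∃ J : ℕ, ∀ j ≥ J,
      ENNReal.ofReal (Real.exp (L (j+1) ^ ((2 * k : ℝ) + ε))) *
        S12 (fun x => fj j x - f x) (fun x => fj' j x - f' x) ≤ ENNReal.ofReal B := by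
  set p : ℝ := (2 * k : ℝ) + ε with hp_def
  have hp : 1 ≤ p := by
    have : (1 : ℝ) ≤ k := by exact_mod_cast hk
    linarith
  have hω' : 0 < |ω| := abs_pos.2 hω
  set J : ℕ := max j₀ ⌈|ω|⌉₊
  have hL1 : ∀ j ≥ J, 1 ≤ L (j + 1) := by
    intro j hj
    rw [hL, one_le_div hω']
    calc |ω| ≤ (⌈|ω|⌉₊ : ℝ) := Nat.le_ceil _
      _ ≤ ((j + 1 : ℕ) : ℝ) := by
        exact_mod_cast (le_max_right _ _).trans (hj.trans (Nat.le_succ j))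
      _ ≤ _ := by exact_mod_cast Nat.self_le_factorial _
  have hL2 : ∀ j, 2 * L (j + 1) ≤ L (j + 1 + 1) := by
    intro j
    rw [hL, hL, Nat.factorial_succ (j + 1), ← mul_div_assoc]
    gcongr
    push_cast
    gcongr
    linarith [(Nat.cast_nonneg j : (0 : ℝ) ≤ j)]
  have hmain := le_two_mul_of_halving (J := J) hconv
    (c := fun j => ENNReal.ofReal (C * Real.exp (-(L (j+1) ^ p))))
    (fun j hj => (S12_sub_le (hwdj j) (hwdj (j + 1)) hwd).trans
      (add_le_add_left (hdiff j ((le_max_left _ _).trans hj)) _))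
    (fun j hj => by
      have h := exp_decay_halves (hL1 j hj) (hL2 j) hp
      rw [← ENNReal.ofReal_ofNat, ← ENNReal.ofReal_mul (by norm_num)]
      exact ENNReal.ofReal_le_ofReal (by nlinarith))
  refine ⟨2 * C, by positivity, J, fun j hj => ?_⟩
  calc _ ≤ ENNReal.ofReal (Real.exp (L (j+1) ^ p)) *
        (2 * ENNReal.ofReal (C * Real.exp (-(L (j+1) ^ p)))) := by
        gcongr
        exact hmain j hj
    _ = ENNReal.ofReal (2 * C) := by
      rw [← ENNReal.ofReal_ofNat, ← ENNReal.ofReal_mul (by norm_num),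
        ← ENNReal.ofReal_mul (Real.exp_pos _).le, Real.exp_neg]
      congr 1
      field_simp
end
end

section
/- Let g : ℝ → ℂ be continuous and periodic with period P > 0, and let L ∈ ℝ be such that L/P is irrational. Then the averages A_{n,L}[g] converge uniformly on ℝ, as n → ∞, to the constant function equal to the mean (1/P) ∫₀^P g(y) dy: for every ε > 0 there exists N such that for all n ≥ N and all x ∈ ℝ, | (1/n) ∑_{m=0}^{n−1} g(x + mL) − (1/P) ∫₀^P g(y) dy | < ε. -/
/-!
This is Weyl's equidistribution theorem, in the uniform form that expresses unique ergodicity of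
the irrational rotation. A continuous `P`-periodic function descends to the circle `ℝ / Pℤ`, where
the averages become Birkhoff averages of the rotation by the class of `L`.

For a character `fourier k` with `k ≠ 0` the average at `x` is `fourier k x` times
`n⁻¹ * ∑ m < n, q ^ m` with `q = exp (2πi k L / P)`. Irrationality of `L / P` says exactly that
`q ≠ 1` for all such `k`, so this geometric sum is bounded by `2 / ‖q - 1‖` and the average is
`O(1 / n)` uniformly in `x` (`circleAvg_fourier`). Linearity extends the convergence to
trigonometric polynomials. These are dense in the continuous functions
(`span_fourier_closure_eq_top`), and both the averages and the mean are contractions for the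
sup norm, so the convergence passes to all continuous functions (`circleAvg_tendsto`).
-/

open MeasureTheory Filter Topology
open scoped ENNReal NNReal

noncomputable section

/-- The `n`-th Birkhoff average of `f` under the rotation of the circle by `l`; it is `0` for
`n = 0`. -/
def circleAvg {P : ℝ} (l : AddCircle P) (f : AddCircle P → ℂ) (n : ℕ) (x : AddCircle P) : ℂ :=
  (n : ℂ)⁻¹ * ∑ m ∈ Finset.range n, f (x + m • l)

/-- An irrational rotation has no nontrivial character that is trivial on its orbit. -/
lemma fourier_ne_one_of_irrational {P L : ℝ} (hirr : Irrational (L / P)) {k : ℤ} (hk : k ≠ 0) :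
    fourier k (L : AddCircle P) ≠ 1 := by
  rw [fourier_coe_apply]
  intro h
  obtain ⟨n, hn⟩ := Complex.exp_eq_one_iff.mp h
  have hpi : (2 * Real.pi * Complex.I : ℂ) ≠ 0 := Complex.two_pi_I_ne_zero
  have h1 : (k : ℂ) * (L / P) = n := by
    apply mul_left_cancel₀ hpi
    rw [mul_comm _ (n : ℂ), ← hn]
    ring
  have h2 : (k : ℝ) * (L / P) = n := by exact_mod_cast h1
  apply hirr.ne_rational n k
  rw [← h2]
  have : (k : ℝ) ≠ 0 := by exact_mod_cast hk
  field_simp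

lemma norm_geom_sum_le {q : ℂ} (hq : q ≠ 1) (hq1 : ‖q‖ = 1) (n : ℕ) :
    ‖∑ m ∈ Finset.range n, q ^ m‖ ≤ 2 / ‖q - 1‖ := by
  rw [geom_sum_eq hq, norm_div]
  gcongr
  calc ‖q ^ n - 1‖ ≤ ‖q ^ n‖ + ‖(1 : ℂ)‖ := norm_sub_le _ _
    _ = 2 := by rw [norm_pow, hq1, one_pow, norm_one]; norm_num

lemma norm_fourier_apply {P : ℝ} (k : ℤ) (x : AddCircle P) : ‖fourier k x‖ = 1 := by
  rw [fourier_apply, Circle.norm_coe]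

lemma fourier_add_nsmul {P : ℝ} (k : ℤ) (x l : AddCircle P) (m : ℕ) :
    fourier k (x + m • l) = fourier k x * fourier k l ^ m := by
  simp only [fourier_apply, smul_add, smul_comm k m l, AddCircle.toCircle_add,
    AddCircle.toCircle_nsmul, Circle.coe_mul, Circle.coe_pow]

lemma integral_fourier {P : ℝ} [Fact (0 < P)] {k : ℤ} (hk : k ≠ 0) :
    ∫ t, fourier k t ∂(AddCircle.haarAddCircle (T := P)) = 0 := by
  -- The mean of `fourier k` is its zeroth Fourier coefficient.
  have h := congrFun (fourierCoeff_fourier (T := P) k) 0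
  rw [Pi.single_eq_of_ne hk.symm, fourierCoeff] at h
  simpa only [neg_zero, fourier_zero, one_smul] using h

lemma circleAvg_fourier {P L : ℝ} [Fact (0 < P)] (hirr : Irrational (L / P)) (k : ℤ) :
    TendstoUniformly (circleAvg (L : AddCircle P) (fourier k))
      (fun _ => ∫ t, fourier k t ∂(AddCircle.haarAddCircle (T := P))) atTop := by
  rw [Metric.tendstoUniformly_iff]
  intro ε hε
  rcases eq_or_ne k 0 with rfl | hk
  · filter_upwards [eventually_ge_atTop 1] with n hn x
    have hn' : (n : ℂ) ≠ 0 := by exact_mod_cast (by lia : n ≠ 0)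
    simpa [circleAvg, fourier_zero, hn', -fourier_apply] using hε
  · rw [integral_fourier hk]
    set q : ℂ := fourier k (L : AddCircle P) with hq
    have hlim : Tendsto (fun n : ℕ => (2 / ‖q - 1‖) / (n : ℝ)) atTop (𝓝 0) :=
      tendsto_const_div_atTop_nhds_zero_nat _
    filter_upwards [hlim.eventually_lt_const hε] with n hn x
    rw [dist_zero_left]
    refine lt_of_le_of_lt ?_ hn
    simp only [circleAvg, fourier_add_nsmul, ← Finset.mul_sum]
    rw [norm_mul, norm_mul, norm_fourier_apply, one_mul, norm_inv, Complex.norm_natCast,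
      div_eq_mul_inv _ (n : ℝ), mul_comm]
    gcongr
    exact norm_geom_sum_le (fourier_ne_one_of_irrational hirr hk) (norm_fourier_apply k _) n

lemma norm_circleAvg_sub_le {P : ℝ} [Fact (0 < P)] (l : AddCircle P) (f h : C(AddCircle P, ℂ))
    (n : ℕ) (x : AddCircle P) : ‖circleAvg l f n x - circleAvg l h n x‖ ≤ ‖f - h‖ := by
  rw [circleAvg, circleAvg, ← mul_sub, ← Finset.sum_sub_distrib, norm_mul, norm_inv,
    Complex.norm_natCast]
  have hsum : ‖∑ m ∈ Finset.range n, (f (x + m • l) - h (x + m • l))‖ ≤ n * ‖f - h‖ := by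
    refine (norm_sum_le_of_le _ fun m _ => (f - h).norm_coe_le_norm (x + m • l)).trans ?_
    simp
  rcases Nat.eq_zero_or_pos n with rfl | hn
  · simp
  · rw [inv_mul_le_iff₀ (by exact_mod_cast hn)]
    exact hsum

lemma integrable_circle {P : ℝ} [Fact (0 < P)] (f : C(AddCircle P, ℂ)) :
    Integrable f AddCircle.haarAddCircle :=
  f.continuous.integrable_of_hasCompactSupport (HasCompactSupport.of_compactSpace _)

lemma norm_integral_circle_sub_le {P : ℝ} [Fact (0 < P)] (f h : C(AddCircle P, ℂ)) :
    ‖(∫ t, f t ∂AddCircle.haarAddCircle) - ∫ t, h t ∂AddCircle.haarAddCircle‖ ≤ ‖f - h‖ := by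
  rw [← integral_sub (integrable_circle f) (integrable_circle h)]
  simpa using norm_integral_le_of_norm_le_const (μ := AddCircle.haarAddCircle)
    (Eventually.of_forall fun t => (f - h).norm_coe_le_norm t)

/-- Unique ergodicity of the irrational rotation: Birkhoff averages of every continuous function on
the circle converge uniformly to its mean. -/
lemma circleAvg_tendsto {P L : ℝ} [Fact (0 < P)] (hirr : Irrational (L / P))
    (f : C(AddCircle P, ℂ)) :
    TendstoUniformly (circleAvg (L : AddCircle P) f)
      (fun _ => ∫ t, f t ∂AddCircle.haarAddCircle) atTop := by
  have hspan : ∀ h ∈ Submodule.span ℂ (Set.range (@fourier P)),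
      TendstoUniformly (circleAvg (L : AddCircle P) h)
        (fun _ => ∫ t, h t ∂AddCircle.haarAddCircle) atTop := by
    intro h hh
    induction hh using Submodule.span_induction with
    | mem h hh =>
      obtain ⟨k, rfl⟩ := hh
      exact circleAvg_fourier hirr k
    | zero =>
      rw [Metric.tendstoUniformly_iff]
      intro ε hε
      exact Eventually.of_forall fun n x => by simpa [circleAvg] using hε
    | add a b _ _ ha hb =>
      convert ha.add hb using 1
      · ext n x
        simp [circleAvg, Finset.sum_add_distrib, mul_add]
      · ext x
        exact integral_add (integrable_circle a) (integrable_circle b)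
    | smul c a _ ha =>
      convert (uniformContinuous_const_smul c).comp_tendstoUniformly ha using 1
      · ext n x
        simp [circleAvg, ← Finset.mul_sum, mul_left_comm]
      · ext x
        exact integral_const_mul c _
  have hf : f ∈ closure (Submodule.span ℂ (Set.range (@fourier P)) : Set C(AddCircle P, ℂ)) := by
    rw [← Submodule.topologicalClosure_coe, span_fourier_closure_eq_top]
    trivial
  rw [Metric.tendstoUniformly_iff]
  intro ε hε
  obtain ⟨h, hh, hfh⟩ := Metric.mem_closure_iff.mp hf (ε / 3) (by positivity)
  filter_upwards [Metric.tendstoUniformly_iff.mp (hspan h hh) (ε / 3) (by positivity)] with n hn x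
  have h1 := norm_circleAvg_sub_le (L : AddCircle P) f h n x
  have h2 := norm_integral_circle_sub_le f h
  have h3 := hn x
  rw [← dist_eq_norm, ← dist_eq_norm] at h1 h2
  rw [dist_comm] at h1
  have h4 := dist_triangle4 (∫ t, f t ∂AddCircle.haarAddCircle)
    (∫ t, h t ∂AddCircle.haarAddCircle) (circleAvg (L : AddCircle P) h n x)
    (circleAvg (L : AddCircle P) f n x)
  linarith

/-- averages of a continuous periodic function along an incommensurable
step converge uniformly to its mean. -/
theorem avg_tendsto_mean (g : ℝ → ℂ) (hg : Continuous g) (P : ℝ) (hP : 0 < P)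
    (hper : Function.Periodic g P) (L : ℝ) (hirr : Irrational (L / P)) :
    ∀ ε : ℝ, 0 < ε → ∃ N : ℕ, ∀ n ≥ N, ∀ x : ℝ,
      ‖avgOp g L n x - ((P : ℂ))⁻¹ * ∫ y in (0:ℝ)..P, g y‖ < ε := by
  intro ε hε
  have : Fact (0 < P) := ⟨hP⟩
  let f : C(AddCircle P, ℂ) := ⟨hper.lift, hg.quotient_lift _⟩
  have hf : ∀ x : ℝ, f (x : AddCircle P) = g x := fun x => rfl
  obtain ⟨N, hN⟩ := eventually_atTop.mp
    (Metric.tendstoUniformly_iff.mp (circleAvg_tendsto hirr f) ε hε)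
  refine ⟨N, fun n hn x => ?_⟩
  have havg : circleAvg (L : AddCircle P) f n x = avgOp g L n x := by
    simp only [circleAvg, avgOp]
    congr 1
    refine Finset.sum_congr rfl fun m _ => ?_
    rw [← hf, AddCircle.coe_add, ← nsmul_eq_mul, AddCircle.coe_nsmul]
  have hint : ∫ t, f t ∂AddCircle.haarAddCircle = (P : ℂ)⁻¹ * ∫ y in (0:ℝ)..P, g y := by
    have h := AddCircle.intervalIntegral_preimage P 0 f
    rw [zero_add] at h
    rw [AddCircle.integral_haarAddCircle, ← h, Complex.real_smul, Complex.ofReal_inv]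
    rfl
  have h := hN n hn x
  rwa [havg, hint, dist_comm, dist_eq_norm] at h
end
end
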